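/- The twin policy of every weak unichain policy for 𝔅_n is a weak unichain policy for 𝔇_n. Moreover, let π_* denote the policy for 𝔅_n in which stay(n) and travel(1) are active, enter(i) is active for all i ∈ {1,…,n}, and leave(j) is active for all j ∈ {1,…,n−1}; then the twin policy of π_* is optimal for 𝔇_n: for every weak unichain policy π̃ for 𝔇_n and every vertex v of 𝔇_n, the value of v under the twin policy of π_* is at least Val_{π̃}(v). -/

import Mathlib

/-! ## The Markov decision process `𝔅_n` -/

/-- Vertices of the MDP `𝔅_n`: a transportation vertex `t`, a sink `s`, a dummy vertex `d`,
and vertices `a i`, `b i` for `i ∈ {1,…,n}`. -/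
inductive BV : Type where
  | t : BV
  | s : BV
  | d : BV
  | a : ℕ → BV
  | b : ℕ → BV
deriving DecidableEq

/-- The vertex `a i` for `i ∈ {1,…,n+1}`, with the convention `a (n+1) = s`. -/
def aN (n i : ℕ) : BV := if i = n + 1 then BV.s else BV.a i

/-- The vertex `b i` for `i ∈ {1,…,n+1}`, with the convention `b (n+1) = d`. -/
def bN (n i : ℕ) : BV := if i = n + 1 then BV.d else BV.b i

/-- The vertex set of `𝔅_n`. -/
def IsBVertex (n : ℕ) : BV → Prop
  | BV.t => True
  | BV.s => True
  | BV.d => True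
  | BV.a i => 1 ≤ i ∧ i ≤ n
  | BV.b i => 1 ≤ i ∧ i ≤ n

/-- The edge relation of `𝔅_n`: travel, enter, skip, board, stay, leave edges,
the edge `(d,s)` and the self-loop `(s,s)`. -/
def BEdge (n : ℕ) (u v : BV) : Prop :=
  (∃ i, 1 ≤ i ∧ i ≤ n ∧ u = BV.t ∧ v = BV.a i) ∨
  (∃ i, 1 ≤ i ∧ i ≤ n ∧ u = BV.a i ∧ v = BV.b i) ∨
  (∃ i, 1 ≤ i ∧ i ≤ n ∧ u = BV.a i ∧ v = aN n (i + 1)) ∨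
  (∃ i, 1 ≤ i ∧ i ≤ n ∧ u = BV.a i ∧ v = BV.t) ∨
  (∃ i, 1 ≤ i ∧ i ≤ n ∧ u = BV.b i ∧ v = bN n (i + 1)) ∨
  (∃ i, 1 ≤ i ∧ i ≤ n ∧ u = BV.b i ∧ v = aN n (i + 1)) ∨
  (u = BV.d ∧ v = BV.s) ∨ (u = BV.s ∧ v = BV.s)

/-- The reward function of `𝔅_n`: `r(enter i) = 2^i`, `r(stay i) = 3/4`,
`r(board i) = -2^i + 5/4`, and reward `0` on all other edges. -/
def rB (n : ℕ) (u v : BV) : ℚ :=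
  match u, v with
  | BV.a i, BV.b j => if i = j then 2 ^ i else 0
  | BV.a i, BV.t => -(2 ^ i) + 5 / 4
  | BV.b i, BV.b j => if j = i + 1 then 3 / 4 else 0
  | BV.b i, BV.d => if i = n then 3 / 4 else 0
  | _, _ => 0

/-- A policy for `𝔅_n` chooses an outgoing edge at every vertex. -/
def IsBPolicy (n : ℕ) (π : BV → BV) : Prop := ∀ u, IsBVertex n u → BEdge n u (π u)

/-- A policy is weak unichain if it reaches the sink `s` from every vertex. -/
def BWeakUnichain (n : ℕ) (π : BV → BV) : Prop :=
  ∀ u, IsBVertex n u → ∃ k, π^[k] u = BV.s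

open Classical in
/-- The value of a vertex `v` w.r.t. a (weak unichain) policy `π`:
the sum of the rewards along the path that `π` takes from `v` to the sink `s`. -/
noncomputable def BVal (n : ℕ) (π : BV → BV) (v : BV) : ℚ :=
  if h : ∃ k, π^[k] v = BV.s then
    ∑ i ∈ Finset.range (Nat.find h), rB n (π^[i] v) (π^[i + 1] v)
  else 0

/-- The reduced costs of the edge `(u,v)` w.r.t. the policy `π`. -/
noncomputable def zB (n : ℕ) (π : BV → BV) (u v : BV) : ℚ :=
  rB n u v + BVal n π v - BVal n π u

/-- The edge `(u,v)` is an improving switch for `π` if its reduced costs are positive. -/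
def BImproving (n : ℕ) (π : BV → BV) (u v : BV) : Prop :=
  BEdge n u v ∧ 0 < zB n π u v

/-- The Bland numbering `𝒩_{𝔅_n}` of the edges of `𝔅_n`. -/
def NB (n : ℕ) (u v : BV) : ℕ :=
  match u, v with
  | BV.t, BV.a i => i
  | BV.a i, BV.b _ => n + 1 + 5 * (i - 1)
  | BV.a i, BV.a _ => n + 2 + 5 * (i - 1)
  | BV.a i, BV.s => n + 2 + 5 * (i - 1)
  | BV.a i, BV.t => n + 3 + 5 * (i - 1)
  | BV.b i, BV.b _ => n + 4 + 5 * (i - 1)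
  | BV.b i, BV.d => n + 4 + 5 * (i - 1)
  | BV.b i, BV.a _ => n + 5 + 5 * (i - 1)
  | BV.b i, BV.s => n + 5 + 5 * (i - 1)
  | BV.d, BV.s => 6 * n + 1
  | BV.s, BV.s => 6 * n + 2
  | _, _ => 0

/-- One step of Bland's policy iteration with edge numbering `N`:
apply the improving switch with the smallest number. -/
def IsBlandStep (n : ℕ) (N : BV → BV → ℕ) (π π' : BV → BV) : Prop :=
  ∃ u v, BImproving n π u v ∧ (∀ u' v', BImproving n π u' v' → N u v ≤ N u' v') ∧
    π' = Function.update π u v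

/-- `BlandReaches n N π ψ` says that Bland's policy iteration started at `π` visits `ψ`. -/
def BlandReaches (n : ℕ) (N : BV → BV → ℕ) : (BV → BV) → (BV → BV) → Prop :=
  Relation.ReflTransGen (IsBlandStep n N)

/-- The canonical policy `π_0` for `0`: `travel 1`, `skip i` and `leave i` are active. -/
def pi0 (n : ℕ) : BV → BV := fun u =>
  match u with
  | BV.t => BV.a 1
  | BV.a i => aN n (i + 1)
  | BV.b i => aN n (i + 1)
  | BV.d => BV.s
  | BV.s => BV.s

/-- The optimal policy `π_*`: `travel 1`, `enter i` for all `i`, `leave j` for `j < n`,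
and `stay n` are active. -/
def piStar (n : ℕ) : BV → BV := fun u =>
  match u with
  | BV.t => BV.a 1
  | BV.a i => BV.b i
  | BV.b i => if i = n then BV.d else BV.a (i + 1)
  | BV.d => BV.s
  | BV.s => BV.s

/-! ## Bits and canonical policies -/

/-- The least significant set bit `ℓ_1(x)` (1-based). -/
noncomputable def lsb (x : ℕ) : ℕ := sInf {i | 1 ≤ i ∧ Nat.testBit x (i - 1)}

/-- The most significant set bit `m(x)` (1-based). -/
noncomputable def msb1 (x : ℕ) : ℕ := sSup {i | 1 ≤ i ∧ Nat.testBit x (i - 1)}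

/-- The least unset bit `ℓ_0(x)` (1-based). -/
noncomputable def lzero (x : ℕ) : ℕ := sInf {i | 1 ≤ i ∧ ¬ Nat.testBit x (i - 1)}

/-- `L_i(x) = max { j ≤ i-2 | x_j = 1 or j = 1 }` (1-based bits). -/
noncomputable def Lfun (i x : ℕ) : ℕ :=
  sSup {j | 1 ≤ j ∧ j ≤ i - 2 ∧ (Nat.testBit x (j - 1) ∨ j = 1)}

/-- `IsCanonical n x π` says that `π` is the canonical policy `π_x` for `x`. -/
noncomputable def IsCanonical (n x : ℕ) (π : BV → BV) : Prop :=
  IsBPolicy n π ∧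
  if x = 0 then
    π BV.t = BV.a 1 ∧
      ∀ i, 1 ≤ i → i ≤ n → π (BV.a i) = aN n (i + 1) ∧ π (BV.b i) = aN n (i + 1)
  else
    π BV.t = BV.a (lsb x) ∧
    π (BV.b (msb1 x)) = aN n (msb1 x + 1) ∧
    (∀ i, msb1 x < i → i ≤ n → π (BV.a i) = aN n (i + 1) ∧ π (BV.b i) = aN n (i + 1)) ∧
    ∀ i, 1 ≤ i → i ≤ n → Nat.testBit x (i - 1) →
      π (BV.a i) = BV.b i ∧
      (i = 2 → π (BV.b 1) = BV.a 2 ∧ (¬ Nat.testBit x 0 → π (BV.a 1) = BV.a 2)) ∧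
      (3 ≤ i → Nat.testBit x (i - 2) → π (BV.b (i - 1)) = BV.a i) ∧
      (3 ≤ i → ¬ Nat.testBit x (i - 2) →
        π (BV.b (i - 1)) = BV.b i ∧ π (BV.a (i - 1)) = BV.a i ∧
        π (BV.b (i - 2)) = BV.a (i - 1) ∧
        (Lfun i x < i - 2 →
          ∀ j, Lfun i x + 1 ≤ j → j ≤ i - 2 →
            π (BV.a j) = BV.t ∧ π (BV.b (j - 1)) = BV.b j) ∧
        (Lfun i x = 1 → ¬ Nat.testBit x 0 → π (BV.a 1) = BV.t))

/-- Activating a list of edges in a policy, from left to right. -/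
def activateList (π : BV → BV) (L : List (BV × BV)) : BV → BV :=
  L.foldl (fun σ e => Function.update σ e.1 e.2) π

/-- The canonical phases w.r.t. an odd number `x` (with `ℓ := ℓ_0(x)`), as a list of edges
to be activated in order. -/
noncomputable def phaseList (n x : ℕ) : List (BV × BV) :=
  let ℓ := lzero x
  (if Nat.testBit x ℓ then [(BV.b ℓ, aN n (ℓ + 1))] else []) ++
  (if Nat.testBit x ℓ ∨ msb1 x < ℓ then [(BV.b (ℓ - 1), BV.b ℓ)] else []) ++
  [(BV.a ℓ, BV.b ℓ), (BV.t, BV.a ℓ)] ++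
  ((List.range (ℓ - 2)).map fun j => (BV.a (j + 1), BV.t)) ++
  [(BV.a (ℓ - 1), BV.a ℓ)] ++
  (((List.range (ℓ - 3)).reverse).map fun j => (BV.b (j + 1), BV.b (j + 2))) ++
  (if ℓ = 2 then [(BV.b 1, BV.a 2)] else [])

/-! ## The Markov decision process `𝔇_n` -/

/-- Vertices of `𝔇_n`: the original vertices (`base`), and for every edge `(v,w)` of `𝔅_n`
other than the self-loop, the gadget vertices `x v w`, `y v w`, `z v w`. -/
inductive DV : Type where
  | base : BV → DV
  | x : BV → BV → DV
  | y : BV → BV → DV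
  | z : BV → BV → DV
deriving DecidableEq

/-- The edges of `𝔅_n` that get replaced by gadgets (all edges except the self-loop `(s,s)`). -/
def DEdgePair (n : ℕ) (v w : BV) : Prop := BEdge n v w ∧ v ≠ BV.s

/-- The vertex set of `𝔇_n`. -/
def IsDVertex (n : ℕ) : DV → Prop
  | DV.base v => IsBVertex n v
  | DV.x v w => DEdgePair n v w
  | DV.y v w => DEdgePair n v w
  | DV.z v w => DEdgePair n v w

/-- The agent vertices of `𝔇_n` (all vertices except the randomization vertices `y v w`). -/
def IsDAgent (n : ℕ) : DV → Prop
  | DV.base v => IsBVertex n v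
  | DV.x v w => DEdgePair n v w
  | DV.y _ _ => False
  | DV.z v w => DEdgePair n v w

/-- The agent edges of `𝔇_n`. -/
def DEdge (n : ℕ) (u u' : DV) : Prop :=
  (∃ v w, DEdgePair n v w ∧
    ((u = DV.base v ∧ u' = DV.x v w) ∨ (u = DV.x v w ∧ u' = DV.base v) ∨
     (u = DV.x v w ∧ u' = DV.y v w) ∨ (u = DV.z v w ∧ u' = DV.base w))) ∨
  (u = DV.base BV.s ∧ u' = DV.base BV.s)

/-- The reward function of `𝔇_n`: the edge `(z v w, w)` carries the reward of the original
edge `(v,w)`; all other agent edges have reward `0`. -/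
def rD (n : ℕ) (u u' : DV) : ℚ :=
  match u, u' with
  | DV.z v w, DV.base w' => if w' = w then rB n v w else 0
  | _, _ => 0

/-- A policy for `𝔇_n` chooses an outgoing agent edge at every agent vertex. -/
def IsDPolicy (n : ℕ) (π : DV → DV) : Prop := ∀ u, IsDAgent n u → DEdge n u (π u)

/-- `IsDVal n p π V` says that `V` satisfies the Bellman equations characterizing the value
function of the policy `π` for `𝔇_n` with probabilities `p`, with `V s = 0`. -/
def IsDVal (n : ℕ) (p : BV → ℚ) (π : DV → DV) (V : DV → ℚ) : Prop :=
  V (DV.base BV.s) = 0 ∧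
  (∀ u, IsDAgent n u → V u = rD n u (π u) + V (π u)) ∧
  (∀ v w, DEdgePair n v w →
    V (DV.y v w) = p v * V (DV.z v w) + (1 - p v) * V (DV.base v))

open Classical in
/-- The value function of a (weak unichain) policy `π` for `𝔇_n`: the unique solution of the
Bellman equations (normalized to `0` outside the vertex set). -/
noncomputable def DVal (n : ℕ) (p : BV → ℚ) (π : DV → DV) : DV → ℚ :=
  if h : ∃! V : DV → ℚ, IsDVal n p π V ∧ ∀ u, ¬ IsDVertex n u → V u = 0 then
    h.exists.choose
  else fun _ => 0

/-- The reduced costs of an agent edge `(u,u')` of `𝔇_n` w.r.t. the policy `π`. -/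
noncomputable def zD (n : ℕ) (p : BV → ℚ) (π : DV → DV) (u u' : DV) : ℚ :=
  rD n u u' + DVal n p π u' - DVal n p π u

/-- An agent edge of `𝔇_n` is an improving switch if its reduced costs are positive. -/
def DImproving (n : ℕ) (p : BV → ℚ) (π : DV → DV) (u u' : DV) : Prop :=
  DEdge n u u' ∧ 0 < zD n p π u u'

/-- One (agent or positive-probability randomization) step of the process `𝔇_n` under `π`. -/
def DStep (n : ℕ) (p : BV → ℚ) (π : DV → DV) (u u' : DV) : Prop :=
  (IsDAgent n u ∧ u' = π u) ∨
  (∃ v w, DEdgePair n v w ∧ u = DV.y v w ∧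
    ((u' = DV.z v w ∧ 0 < p v) ∨ (u' = DV.base v ∧ 0 < 1 - p v)))

/-- A policy for `𝔇_n` is weak unichain if it reaches `s` with probability one from every
vertex, i.e. `s` is reachable via active/positive-probability steps from every vertex. -/
def DWeakUnichain (n : ℕ) (p : BV → ℚ) (π : DV → DV) : Prop :=
  ∀ u, IsDVertex n u → Relation.ReflTransGen (DStep n p π) u (DV.base BV.s)

/-- The twin policy of a policy `π` for `𝔅_n`: every vertex `v ≠ s` is `π v`-oriented. -/
def twin (π : BV → BV) : DV → DV := fun u =>
  match u with
  | DV.base v => if v = BV.s then DV.base BV.s else DV.x v (π v)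
  | DV.x v w => if w = π v then DV.y v w else DV.base v
  | DV.y v w => DV.y v w
  | DV.z _ w => DV.base w

/-- The vertex numbering `𝒩_V` of `𝔅_n`: the order `(t, a 1, b 1, a 2, b 2, …, a n, b n, d, s)`. -/
def NV (n : ℕ) : BV → ℕ
  | BV.t => 1
  | BV.a i => 2 * i
  | BV.b i => 2 * i + 1
  | BV.d => 2 * n + 2
  | BV.s => 2 * n + 3

/-- The specific probabilities `p_v = 2^{-𝒩_V(v)·(n+5)}`. -/
noncomputable def pSpec (n : ℕ) (v : BV) : ℚ := (2 : ℚ) ^ (-((NV n v * (n + 5) : ℕ) : ℤ))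

/-- The set `B(v)` of agent edges of `𝔇_n` belonging to the vertex `v`. -/
def Belongs (n : ℕ) (v : BV) (e : DV × DV) : Prop :=
  ∃ w, DEdgePair n v w ∧
    (e = (DV.x v w, DV.y v w) ∨ e = (DV.base v, DV.x v w) ∨ e = (DV.x v w, DV.base v))

/-- Applying the improving switch `e` to the policy `π` yields `π'`. -/
def DApply (n : ℕ) (p : BV → ℚ) (π : DV → DV) (e : DV × DV) (π' : DV → DV) : Prop :=
  DImproving n p π e.1 e.2 ∧ π' = Function.update π e.1 e.2

/-- One step of Bland's policy iteration on `𝔇_n` with edge numbering `N`. -/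
def IsBlandStepD (n : ℕ) (p : BV → ℚ) (N : DV → DV → ℕ) (π π' : DV → DV) : Prop :=
  ∃ u u', DImproving n p π u u' ∧ (∀ a b, DImproving n p π a b → N u u' ≤ N a b) ∧
    π' = Function.update π u u'

/-- One step of Dantzig's policy iteration on `𝔇_n`: apply an improving switch of maximal
reduced costs. -/
def DantzigStep (n : ℕ) (p : BV → ℚ) (π π' : DV → DV) : Prop :=
  ∃ u u', DImproving n p π u u' ∧
    (∀ a b, DImproving n p π a b → zD n p π a b ≤ zD n p π u u') ∧
    π' = Function.update π u u'

/-- The finite set of vertices of `𝔅_n`, as a `Finset`. -/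
noncomputable def BVSet (n : ℕ) : Finset BV :=
  {BV.t, BV.d, BV.s} ∪ (Finset.Icc 1 n).image BV.a ∪ (Finset.Icc 1 n).image BV.b

/-- The finite set of agent vertices of `𝔇_n`, as a `Finset`. -/
noncomputable def DAgentSet (n : ℕ) : Finset DV := by
  classical
  exact ((BVSet n).image DV.base) ∪
    (((BVSet n ×ˢ BVSet n).filter fun e => DEdgePair n e.1 e.2).image fun e => DV.x e.1 e.2) ∪
    (((BVSet n ×ˢ BVSet n).filter fun e => DEdgePair n e.1 e.2).image fun e => DV.z e.1 e.2)

/-- The objective of the Largest Increase rule: the sum of the values of all agent vertices. -/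
noncomputable def LIobj (n : ℕ) (p : BV → ℚ) (π : DV → DV) : ℚ :=
  ∑ u ∈ DAgentSet n, DVal n p π u

/-- One step of the Largest Increase policy iteration on `𝔇_n`: apply an improving switch
maximizing the sum of all agent vertex values of the resulting policy. -/
def LIStep (n : ℕ) (p : BV → ℚ) (π π' : DV → DV) : Prop :=
  ∃ u u', DImproving n p π u u' ∧
    (∀ a b, DImproving n p π a b →
      LIobj n p (Function.update π a b) ≤ LIobj n p (Function.update π u u')) ∧
    π' = Function.update π u u'

/-- `N` is a Bland numbering `𝒩_{𝔇_n}` for `𝔇_n`: it is injective on agent edges, the edges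
`(x v w, v)` all come first, within each gadget `(x v w, y v w)` precedes `(v, x v w)`,
the gadget blocks are ordered according to `𝒩_{𝔅_n}`, and the self-loop comes last. -/
def IsDBlandNumbering (n : ℕ) (N : DV → DV → ℕ) : Prop :=
  (∀ u₁ u₂ u₁' u₂', DEdge n u₁ u₂ → DEdge n u₁' u₂' → N u₁ u₂ = N u₁' u₂' →
    u₁ = u₁' ∧ u₂ = u₂') ∧
  (∀ v w v' w', DEdgePair n v w → DEdgePair n v' w' →
    N (DV.x v w) (DV.base v) < N (DV.x v' w') (DV.y v' w')) ∧
  (∀ v w, DEdgePair n v w → N (DV.x v w) (DV.y v w) < N (DV.base v) (DV.x v w)) ∧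
  (∀ v w v' w', DEdgePair n v w → DEdgePair n v' w' → NB n v w < NB n v' w' →
    N (DV.base v) (DV.x v w) < N (DV.x v' w') (DV.y v' w')) ∧
  (∀ v w, DEdgePair n v w → N (DV.base v) (DV.x v w) < N (DV.base BV.s) (DV.base BV.s))

/-- Values of the base vertices under `π_*`. -/
def WS (n : ℕ) : BV → ℚ
  | BV.t => 2 ^ (n + 1) - 2 + 3 / 4
  | BV.s => 0
  | BV.d => 0
  | BV.a i => 2 ^ (n + 1) - 2 ^ i + 3 / 4
  | BV.b i => 2 ^ (n + 1) - 2 ^ (i + 1) + 3 / 4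

/-- Values of all vertices of `𝔇_n` under the twin policy of `π_*`. -/
def VS0 (n : ℕ) (p : BV → ℚ) : DV → ℚ
  | DV.base v => WS n v
  | DV.x v _ => WS n v
  | DV.z v w => rB n v w + WS n w
  | DV.y v w => p v * (rB n v w + WS n w) + (1 - p v) * WS n v

open Classical in
/-- The normalized version of `VS0`. -/
noncomputable def VS (n : ℕ) (p : BV → ℚ) (u : DV) : ℚ :=
  if IsDVertex n u then VS0 n p u else 0

theorem BEdge_vertex {n : ℕ} {v w : BV} (h : BEdge n v w) : IsBVertex n v ∧ IsBVertex n w := by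
  unfold BEdge at h
  rcases h with ⟨i, h1, h2, rfl, rfl⟩ | ⟨i, h1, h2, rfl, rfl⟩ | ⟨i, h1, h2, rfl, rfl⟩ |
    ⟨i, h1, h2, rfl, rfl⟩ | ⟨i, h1, h2, rfl, rfl⟩ | ⟨i, h1, h2, rfl, rfl⟩ | ⟨rfl, rfl⟩ | ⟨rfl, rfl⟩ <;>
  (try simp only [aN, bN]) <;> (try split_ifs) <;> simp only [IsBVertex] <;>
  first | trivial | (simp; done) | (refine ⟨?_, ?_⟩ <;> first | trivial | omega)

theorem WS_edge {n : ℕ} (hn : 1 ≤ n) {v w : BV} (h : BEdge n v w) :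
    rB n v w + WS n w ≤ WS n v ∧ 0 ≤ rB n v w + WS n w := by
  have hmono : ∀ i j : ℕ, i ≤ j → (2 : ℚ) ^ i ≤ 2 ^ j := fun i j hij =>
    pow_le_pow_right₀ (by norm_num) hij
  have hpos : ∀ i : ℕ, (0 : ℚ) < 2 ^ i := fun i => by positivity
  unfold BEdge at h
  rcases h with ⟨i, h1, h2, rfl, rfl⟩ | ⟨i, h1, h2, rfl, rfl⟩ | ⟨i, h1, h2, rfl, rfl⟩ |
    ⟨i, h1, h2, rfl, rfl⟩ | ⟨i, h1, h2, rfl, rfl⟩ | ⟨i, h1, h2, rfl, rfl⟩ | ⟨rfl, rfl⟩ | ⟨rfl, rfl⟩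
  · have := hmono 1 i h1
    have := hmono i (n + 1) (by omega)
    simp only [rB, WS]; constructor <;> linarith
  · have := hmono (i + 1) (n + 1) (by omega)
    have := hpos i
    simp only [rB, WS, if_true]
    constructor
    · have := pow_succ (2 : ℚ) i; linarith
    · linarith
  · have := hmono (i + 1) (n + 1) (by omega)
    have := hpos i
    have := pow_succ (2 : ℚ) i
    unfold aN
    split_ifs with hi
    · simp only [rB, WS]; constructor <;> linarith
    · simp only [rB, WS]
      have := hmono (i + 1) (n + 1) (by omega)
      constructor <;> linarith
  · have := hmono (i + 1) (n + 1) (by omega)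
    have := hmono 1 i h1
    have := pow_succ (2 : ℚ) i
    simp only [rB, WS]; constructor <;> linarith
  · have := hmono (i + 1) (n + 1) (by omega)
    have := hmono 1 i h1
    have := pow_succ (2 : ℚ) i
    have := pow_succ (2 : ℚ) (i + 1)
    unfold bN
    split_ifs with hi
    · have hin : i = n := by omega
      subst hin
      simp only [rB, WS, if_true]; constructor <;> linarith
    · have := hmono (i + 1 + 1) (n + 1) (by omega)
      simp only [rB, WS, if_true]; constructor <;> linarith
  · have := hmono (i + 1) (n + 1) (by omega)
    unfold aN
    split_ifs with hi <;> simp only [rB, WS] <;> constructor <;> linarith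
  · simp [rB, WS]
  · simp [rB, WS]

theorem WS_nonneg {n : ℕ} (hn : 1 ≤ n) {v : BV} (h : IsBVertex n v) : 0 ≤ WS n v := by
  have hmono : ∀ i j : ℕ, i ≤ j → (2 : ℚ) ^ i ≤ 2 ^ j := fun i j hij =>
    pow_le_pow_right₀ (by norm_num) hij
  cases v with
  | t => have := hmono 1 (n + 1) (by omega); simp only [WS]; linarith
  | s => simp [WS]
  | d => simp [WS]
  | a i =>
    simp only [IsBVertex] at h
    have := hmono i (n + 1) (by omega); simp only [WS]; linarith
  | b i =>
    simp only [IsBVertex] at h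
    have := hmono (i + 1) (n + 1) (by omega); simp only [WS]; linarith

theorem WS_star {n : ℕ} {v : BV} (h : IsBVertex n v) :
    rB n v (piStar n v) + WS n (piStar n v) = WS n v := by
  cases v with
  | t => simp [piStar, rB, WS]
  | s => simp [piStar, rB, WS]
  | d => simp [piStar, rB, WS]
  | a i => simp only [piStar, rB, WS, if_true]; ring
  | b i =>
    simp only [piStar]
    split_ifs with hi
    · subst hi; simp [rB, WS]
    · simp [rB, WS]

theorem piStar_policy {n : ℕ} (hn : 1 ≤ n) : IsBPolicy n (piStar n) := by
  intro u hu
  unfold BEdge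
  cases u with
  | t => left; exact ⟨1, le_refl _, hn, rfl, rfl⟩
  | s => simp [piStar]
  | d => simp [piStar]
  | a i => right; left; exact ⟨i, hu.1, hu.2, rfl, rfl⟩
  | b i =>
    simp only [IsBVertex] at hu
    simp only [piStar]
    split_ifs with hi
    · right; right; right; right; left
      exact ⟨i, hu.1, hu.2, rfl, by simp [bN, hi]⟩
    · right; right; right; right; right; left
      exact ⟨i, hu.1, hu.2, rfl, by simp [aN, hi]⟩

theorem piStar_unichain {n : ℕ} (hn : 1 ≤ n) : BWeakUnichain n (piStar n) := by
  have key : ∀ u, (∃ k, (piStar n)^[k] (piStar n u) = BV.s) → ∃ k, (piStar n)^[k] u = BV.s := by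
    rintro u ⟨k, hk⟩
    exact ⟨k + 1, by simpa [Function.iterate_succ_apply] using hk⟩
  have hs : ∃ k, (piStar n)^[k] BV.s = BV.s := ⟨0, rfl⟩
  have hd : ∃ k, (piStar n)^[k] BV.d = BV.s := key _ hs
  have ha : ∀ m i, 1 ≤ i → i ≤ n → n - i = m → ∃ k, (piStar n)^[k] (BV.b i) = BV.s := by
    intro m
    induction m with
    | zero =>
      intro i h1 h2 h3
      have : i = n := by omega
      apply key
      simpa [piStar, this] using hd
    | succ m ih =>
      intro i h1 h2 h3
      have : i ≠ n := by omega
      apply key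
      simp only [piStar, this, if_false]
      apply key
      exact ih (i + 1) (by omega) (by omega) (by omega)
  intro u hu
  cases u with
  | t => apply key; apply key; exact ha _ 1 (le_refl _) hn rfl
  | s => exact hs
  | d => exact hd
  | a i => apply key; exact ha _ i hu.1 hu.2 rfl
  | b i => exact ha _ i hu.1 hu.2 rfl

theorem twin_policy {n : ℕ} {π : BV → BV} (h : IsBPolicy n π) : IsDPolicy n (twin π) := by
  intro u hu
  cases u with
  | base v =>
    simp only [twin]
    split_ifs with hv
    · right; exact ⟨by rw [hv], rfl⟩
    · left; exact ⟨v, π v, ⟨h v hu, hv⟩, Or.inl ⟨rfl, rfl⟩⟩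
  | x v w =>
    simp only [twin]
    left
    refine ⟨v, w, hu, ?_⟩
    split_ifs with hv
    · exact Or.inr (Or.inr (Or.inl ⟨rfl, rfl⟩))
    · exact Or.inr (Or.inl ⟨rfl, rfl⟩)
  | y v w => exact hu.elim
  | z v w => left; exact ⟨v, w, hu, Or.inr (Or.inr (Or.inr ⟨rfl, rfl⟩))⟩

theorem twin_unichain {n : ℕ} {p : BV → ℚ}
    (hp : ∀ v, IsBVertex n v → v ≠ BV.s → 0 < p v ∧ p v ≤ 1) {π : BV → BV}
    (h : IsBPolicy n π) (hu : BWeakUnichain n π) : DWeakUnichain n p (twin π) := by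
  have hyz : ∀ v w, DEdgePair n v w → DStep n p (twin π) (DV.y v w) (DV.z v w) := fun v w hvw =>
    Or.inr ⟨v, w, hvw, rfl, Or.inl ⟨rfl, (hp v (BEdge_vertex hvw.1).1 hvw.2).1⟩⟩
  have hzb : ∀ v w, DEdgePair n v w → DStep n p (twin π) (DV.z v w) (DV.base w) := fun v w hvw =>
    Or.inl ⟨hvw, rfl⟩
  have hb : ∀ k v, IsBVertex n v → π^[k] v = BV.s →
      Relation.ReflTransGen (DStep n p (twin π)) (DV.base v) (DV.base BV.s) := by
    intro k
    induction k with
    | zero => intro v _ hk; simp at hk; rw [hk]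
    | succ k ih =>
      intro v hv hk
      by_cases hs : v = BV.s
      · rw [hs]
      have he : DEdgePair n v (π v) := ⟨h v hv, hs⟩
      have h4 := ih (π v) (BEdge_vertex he.1).2 (by simpa [Function.iterate_succ_apply] using hk)
      refine Relation.ReflTransGen.head (b := DV.x v (π v)) (Or.inl ⟨hv, by simp [twin, hs]⟩) ?_
      refine Relation.ReflTransGen.head (b := DV.y v (π v)) (Or.inl ⟨he, by simp [twin]⟩) ?_
      exact Relation.ReflTransGen.head (hyz _ _ he) (Relation.ReflTransGen.head (hzb _ _ he) h4)
  have hb' : ∀ v, IsBVertex n v →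
      Relation.ReflTransGen (DStep n p (twin π)) (DV.base v) (DV.base BV.s) := fun v hv => by
    obtain ⟨k, hk⟩ := hu v hv
    exact hb k v hv hk
  have hz : ∀ v w, DEdgePair n v w →
      Relation.ReflTransGen (DStep n p (twin π)) (DV.z v w) (DV.base BV.s) := fun v w hvw =>
    Relation.ReflTransGen.head (hzb _ _ hvw) (hb' _ (BEdge_vertex hvw.1).2)
  have hy : ∀ v w, DEdgePair n v w →
      Relation.ReflTransGen (DStep n p (twin π)) (DV.y v w) (DV.base BV.s) := fun v w hvw =>
    Relation.ReflTransGen.head (hyz _ _ hvw) (hz _ _ hvw)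
  intro u hu
  cases u with
  | base v => exact hb' v hu
  | x v w =>
    by_cases hw : w = π v
    · exact Relation.ReflTransGen.head (b := DV.y v w) (Or.inl ⟨hu, by simp [twin, hw]⟩) (hy _ _ hu)
    · exact Relation.ReflTransGen.head (b := DV.base v) (Or.inl ⟨hu, by simp [twin, hw]⟩)
        (hb' _ (BEdge_vertex hu.1).1)
  | y v w => exact hy v w hu
  | z v w => exact hz v w hu

theorem DV_finite (n : ℕ) : Set.Finite {u | IsDVertex n u} := by
  have hB : ∀ v, IsBVertex n v → v ∈ BVSet n := by
    intro v hv
    cases v <;> simp_all [IsBVertex, BVSet]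
  have hP : Set.Finite ((BVSet n : Set BV) ×ˢ (BVSet n : Set BV)) :=
    (Finset.finite_toSet _).prod (Finset.finite_toSet _)
  refine ((((Finset.finite_toSet (BVSet n)).image DV.base).union
    (hP.image fun e => DV.x e.1 e.2)).union
    ((hP.image fun e => DV.y e.1 e.2).union (hP.image fun e => DV.z e.1 e.2))).subset ?_
  intro u hu
  cases u with
  | base v => exact Or.inl (Or.inl ⟨v, hB v hu, rfl⟩)
  | x v w =>
    exact Or.inl (Or.inr ⟨(v, w), ⟨hB _ (BEdge_vertex hu.1).1, hB _ (BEdge_vertex hu.1).2⟩, rfl⟩)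
  | y v w =>
    exact Or.inr (Or.inl ⟨(v, w), ⟨hB _ (BEdge_vertex hu.1).1, hB _ (BEdge_vertex hu.1).2⟩, rfl⟩)
  | z v w =>
    exact Or.inr (Or.inr ⟨(v, w), ⟨hB _ (BEdge_vertex hu.1).1, hB _ (BEdge_vertex hu.1).2⟩, rfl⟩)

theorem DEdge_vertex {n : ℕ} {u u' : DV} (h : DEdge n u u') : IsDVertex n u' := by
  rcases h with ⟨v, w, hvw, h⟩ | ⟨rfl, rfl⟩
  · rcases h with ⟨rfl, rfl⟩ | ⟨rfl, rfl⟩ | ⟨rfl, rfl⟩ | ⟨rfl, rfl⟩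
    · exact hvw
    · exact (BEdge_vertex hvw.1).1
    · exact hvw
    · exact (BEdge_vertex hvw.1).2
  · trivial

theorem IsDAgent.vertex {n : ℕ} {u : DV} (h : IsDAgent n u) : IsDVertex n u := by
  cases u with
  | base v => exact h
  | x v w => exact h
  | y v w => exact h.elim
  | z v w => exact h

/-- Comparison (maximum) principle. -/
theorem comparison {n : ℕ} {p : BV → ℚ}
    (hp : ∀ v, IsBVertex n v → v ≠ BV.s → 0 < p v ∧ p v ≤ 1) {π : DV → DV}
    (hpol : IsDPolicy n π) (huni : DWeakUnichain n p π) {D : DV → ℚ}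
    (hs : D (DV.base BV.s) = 0)
    (hag : ∀ u, IsDAgent n u → D u ≤ D (π u))
    (hy : ∀ v w, DEdgePair n v w →
      D (DV.y v w) ≤ p v * D (DV.z v w) + (1 - p v) * D (DV.base v)) :
    ∀ u, IsDVertex n u → D u ≤ 0 := by
  obtain ⟨m, hm, hmax⟩ := Set.exists_max_image _ D (DV_finite n) ⟨DV.base BV.s, trivial⟩
  have hstep : ∀ u u', IsDVertex n u ∧ D u = D m → DStep n p π u u' →
      IsDVertex n u' ∧ D u' = D m := by
    rintro u u' ⟨hu, hD⟩ (⟨ha, rfl⟩ | ⟨v, w, hvw, rfl, h⟩)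
    · have hv := DEdge_vertex (hpol u ha)
      exact ⟨hv, le_antisymm (hmax _ hv) (hD ▸ hag u ha)⟩
    · have hvB := (BEdge_vertex hvw.1).1
      have h1 : D (DV.z v w) ≤ D m := hmax (DV.z v w) hvw
      have h2 : D (DV.base v) ≤ D m := hmax (DV.base v) hvB
      have h3 := hy v w hvw
      obtain ⟨h4, h5⟩ := hp v hvB hvw.2
      rw [hD] at h3
      rcases h with ⟨rfl, h6⟩ | ⟨rfl, h6⟩
      · exact ⟨hvw, le_antisymm h1 (by nlinarith)⟩
      · exact ⟨hvB, le_antisymm h2 (by nlinarith)⟩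
  have hend : ∀ u', Relation.ReflTransGen (DStep n p π) m u' → IsDVertex n u' ∧ D u' = D m := by
    intro u' h
    induction h with
    | refl => exact ⟨hm, rfl⟩
    | tail _ h2 ih => exact hstep _ _ ih h2
  have h0 := (hend _ (huni m hm)).2
  intro u hu
  have := hmax u hu
  linarith

theorem VS_vertex {n : ℕ} {p : BV → ℚ} {u : DV} (h : IsDVertex n u) : VS n p u = VS0 n p u := by
  simp [VS, h]

theorem VS_IsDVal {n : ℕ} (hn : 1 ≤ n) (p : BV → ℚ) :
    IsDVal n p (twin (piStar n)) (VS n p) := by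
  refine ⟨by rw [VS_vertex (by trivial)]; rfl, ?_, ?_⟩
  · intro u hu
    rw [VS_vertex hu.vertex, VS_vertex (DEdge_vertex (twin_policy (piStar_policy hn) u hu))]
    cases u with
    | base v =>
      simp only [twin]
      split_ifs with hv
      · rw [hv]; simp [VS0, rD]
      · simp [VS0, rD]
    | x v w =>
      simp only [twin]
      split_ifs with hw
      · have := WS_star (BEdge_vertex hu.1).1
        rw [hw]
        simp only [VS0, rD, this]; ring
      · simp [VS0, rD]
    | y v w => exact hu.elim
    | z v w => simp [twin, VS0, rD]
  · intro v w hvw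
    have hv : IsDVertex n (DV.base v) := (BEdge_vertex hvw.1).1
    have hz : IsDVertex n (DV.z v w) := hvw
    have hy : IsDVertex n (DV.y v w) := hvw
    rw [VS_vertex hv, VS_vertex hz, VS_vertex hy]
    rfl

theorem VS_super {n : ℕ} (hn : 1 ≤ n) {p : BV → ℚ}
    (hp : ∀ v, IsBVertex n v → v ≠ BV.s → 0 < p v ∧ p v ≤ 1) {u u' : DV}
    (hu : IsDVertex n u) (h : DEdge n u u') : rD n u u' + VS n p u' ≤ VS n p u := by
  rw [VS_vertex hu, VS_vertex (DEdge_vertex h)]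
  rcases h with ⟨v, w, hvw, h⟩ | ⟨rfl, rfl⟩
  · rcases h with ⟨rfl, rfl⟩ | ⟨rfl, rfl⟩ | ⟨rfl, rfl⟩ | ⟨rfl, rfl⟩
    · simp [rD, VS0]
    · simp [rD, VS0]
    · have h1 := (WS_edge hn hvw.1).1
      have h2 := hp v (BEdge_vertex hvw.1).1 hvw.2
      simp only [rD, VS0]
      nlinarith
    · simp [rD, VS0]
  · simp [rD, VS0]

theorem VS_nonneg {n : ℕ} (hn : 1 ≤ n) {p : BV → ℚ}
    (hp : ∀ v, IsBVertex n v → v ≠ BV.s → 0 < p v ∧ p v ≤ 1) {u : DV}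
    (hu : IsDVertex n u) : 0 ≤ VS n p u := by
  rw [VS_vertex hu]
  cases u with
  | base v => exact WS_nonneg hn hu
  | x v w => exact WS_nonneg hn (BEdge_vertex hu.1).1
  | z v w => exact (WS_edge hn hu.1).2
  | y v w =>
    have h1 := (WS_edge hn hu.1).2
    have h2 := WS_nonneg hn (BEdge_vertex hu.1).1
    obtain ⟨h3, h4⟩ := hp v (BEdge_vertex hu.1).1 hu.2
    exact add_nonneg (mul_nonneg h3.le h1) (mul_nonneg (by linarith) h2)

theorem DVal_star {n : ℕ} (hn : 1 ≤ n) {p : BV → ℚ}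
    (hp : ∀ v, IsBVertex n v → v ≠ BV.s → 0 < p v ∧ p v ≤ 1) :
    DVal n p (twin (piStar n)) = VS n p := by
  have hpol := twin_policy (piStar_policy hn)
  have huni := twin_unichain hp (piStar_policy hn) (piStar_unichain hn)
  have hVS := VS_IsDVal hn p
  have hle : ∀ V V', IsDVal n p (twin (piStar n)) V → IsDVal n p (twin (piStar n)) V' →
      ∀ u, IsDVertex n u → V u ≤ V' u := by
    intro V V' h h' u hu
    have := comparison hp hpol huni (D := fun u => V u - V' u) (by simp [h.1, h'.1])
      (fun u hu => by
        have h1 := h.2.1 u hu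
        have h2 := h'.2.1 u hu
        show V u - V' u ≤ V _ - V' _
        linarith)
      (fun v w hvw => by
        have h1 := h.2.2 v w hvw
        have h2 := h'.2.2 v w hvw
        show V _ - V' _ ≤ p v * (V _ - V' _) + (1 - p v) * (V _ - V' _)
        rw [h1, h2]; apply le_of_eq; ring) u hu
    linarith
  have hout : ∀ u, ¬ IsDVertex n u → VS n p u = 0 := fun u hu => by simp [VS, hu]
  have huniq : ∀ V, (IsDVal n p (twin (piStar n)) V ∧ ∀ u, ¬ IsDVertex n u → V u = 0) →
      V = VS n p := by
    rintro V ⟨h, h0⟩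
    funext u
    by_cases hu : IsDVertex n u
    · exact le_antisymm (hle _ _ h hVS u hu) (hle _ _ hVS h u hu)
    · rw [h0 u hu, hout u hu]
  have hex : ∃! V : DV → ℚ, IsDVal n p (twin (piStar n)) V ∧ ∀ u, ¬ IsDVertex n u → V u = 0 :=
    ⟨VS n p, ⟨hVS, hout⟩, huniq⟩
  unfold DVal
  rw [dif_pos hex]
  exact huniq _ hex.exists.choose_spec

/-- The twin policy of every weak unichain policy for `𝔅_n` is a weak unichain policy
for `𝔇_n`, and the twin policy of the optimal policy `π_*` is optimal for `𝔇_n`. -/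
theorem stmt10 (n : ℕ) (hn : 1 ≤ n) (p : BV → ℚ)
    (hp : ∀ v, IsBVertex n v → v ≠ BV.s → 0 < p v ∧ p v ≤ 1) :
    (∀ π, IsBPolicy n π → BWeakUnichain n π →
      IsDPolicy n (twin π) ∧ DWeakUnichain n p (twin π)) ∧
    (∀ π', IsDPolicy n π' → DWeakUnichain n p π' →
      ∀ u, IsDVertex n u → DVal n p π' u ≤ DVal n p (twin (piStar n)) u) := by
  refine ⟨fun π h hu => ⟨twin_policy h, twin_unichain hp h hu⟩, ?_⟩
  intro π' hpol huni u hu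
  rw [DVal_star hn hp]
  have hVS := VS_IsDVal hn p
  by_cases hex : ∃! V : DV → ℚ, IsDVal n p π' V ∧ ∀ u, ¬ IsDVertex n u → V u = 0
  · have hV : IsDVal n p π' (DVal n p π') := by
      unfold DVal
      rw [dif_pos hex]
      exact hex.exists.choose_spec.1
    have := comparison hp hpol huni (D := fun u => DVal n p π' u - VS n p u)
      (by simp [hV.1, hVS.1])
      (fun u hu => by
        have h1 := hV.2.1 u hu
        have h2 := VS_super hn hp hu.vertex (hpol u hu)
        show DVal n p π' u - VS n p u ≤ DVal n p π' _ - VS n p _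
        linarith)
      (fun v w hvw => by
        have h1 := hV.2.2 v w hvw
        have h2 := hVS.2.2 v w hvw
        show DVal n p π' _ - VS n p _ ≤
          p v * (DVal n p π' _ - VS n p _) + (1 - p v) * (DVal n p π' _ - VS n p _)
        rw [h1, h2]; apply le_of_eq; ring) u hu
    linarith
  · unfold DVal
    rw [dif_neg hex]
    exact VS_nonneg hn hp hu
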